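/- Let U : ℝ → ℂ be a smooth function compactly supported in (0,∞), let t, x ∈ ℝ, N > 0, let q be a positive integer and a a positive integer with gcd(a,q) = 1, and let ā be an integer with a·ā ≡ 1 (mod q). Then Σ_{r=1}^∞ r^{−it} e(rā/q) e(−rx/(aq)) U(r/N) = N^{1−it} · Σ_{r ∈ ℤ, r ≡ −ā (mod q)} U†( N(x + ra)/(aq), 1 − it ), where U†(v, w) = ∫_0^∞ U(u) e(−vu) u^{w−1} du, and the sum on the right-hand side converges absolutely. -/

import Mathlib

open Complex Real

noncomputable def e (x : ℝ) : ℂ := Complex.exp (2 * Real.pi * Complex.I * x)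

/-- The Fourier–Mellin transform `U†(v,w) = ∫_0^∞ U(u) e(−vu) u^{w−1} du`. -/
noncomputable def Udag (U : ℝ → ℂ) (v : ℝ) (w : ℂ) : ℂ :=
  ∫ u in Set.Ioi (0:ℝ), U u * e (-(v * u)) * (u : ℂ) ^ (w - 1)


open scoped FourierTransform SchwartzMap in
/-- Poisson summation for smooth compactly supported functions, with summability. -/
theorem poisson_aux (f : ℝ → ℂ) (hf : ContDiff ℝ (⊤ : ℕ∞) f) (hc : HasCompactSupport f) :
    (Summable fun n : ℤ => ‖𝓕 f (n : ℝ)‖) ∧ ∑' n : ℤ, f n = ∑' n : ℤ, 𝓕 f (n : ℝ) := by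
  have h2 := (𝓕 (hc.toSchwartzMap hf)).isBigO_cocompact_rpow (-2)
  have h3 := SchwartzMap.tsum_eq_tsum_fourier (hc.toSchwartzMap hf) 0
  constructor
  · have h4 := summable_of_isBigO (Real.summable_abs_int_rpow one_lt_two)
      (h2.comp_tendsto Int.tendsto_coe_cofinite)
    exact h4.norm
  · simp only [zero_add, QuotientAddGroup.mk_zero, fourier_eval_zero, mul_one] at h3
    exact h3

theorem U_zero (U : ℝ → ℂ) (hsupp : tsupport U ⊆ Set.Ioi 0) (u : ℝ) (hu : u ≤ 0) : U u = 0 := by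
  apply image_eq_zero_of_notMem_tsupport
  intro h
  exact absurd (hsupp h) (not_lt.mpr hu)

/-- The function to which Poisson summation is applied. -/
noncomputable def Faux (U : ℝ → ℂ) (t N c d : ℝ) (y : ℝ) : ℂ :=
  Complex.exp ((Real.log y : ℝ) * (-(Complex.I * (t : ℂ)))) * e (y * c) * e (-(y * d)) * U (y / N)

theorem Faux_contDiff (U : ℝ → ℂ) (hU : ContDiff ℝ (⊤ : ℕ∞) U)
    (hsupp : tsupport U ⊆ Set.Ioi 0) (t N c d : ℝ) (hN : 0 < N) :
    ContDiff ℝ (⊤ : ℕ∞) (Faux U t N c d) := by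
  rw [contDiff_iff_contDiffAt]
  intro y
  rcases le_or_gt y 0 with hy | hy
  · have h1 : y / N ∉ tsupport U := fun h =>
      absurd (hsupp h) (not_lt.mpr (div_nonpos_of_nonpos_of_nonneg hy hN.le))
    have h2 : ∀ᶠ z in nhds y, z / N ∉ tsupport U := by
      have hcont : ContinuousAt (fun z : ℝ => z / N) y := by fun_prop
      exact hcont.eventually ((isClosed_tsupport U).isOpen_compl.mem_nhds h1)
    have h3 : Faux U t N c d =ᶠ[nhds y] fun _ => 0 := by
      filter_upwards [h2] with z hz
      simp [Faux, image_eq_zero_of_notMem_tsupport hz]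
    exact contDiffAt_const.congr_of_eventuallyEq h3
  · have hl : ContDiffAt ℝ (⊤ : ℕ∞) (fun y : ℝ => ((Real.log y : ℝ) : ℂ)) y :=
      Complex.ofRealCLM.contDiff.contDiffAt.comp y (Real.contDiffAt_log.2 hy.ne')
    have he : ContDiff ℝ (⊤ : ℕ∞) e := by
      unfold e
      exact (contDiff_const.mul Complex.ofRealCLM.contDiff).cexp
    unfold Faux
    refine (((hl.mul contDiffAt_const).cexp.mul ?_).mul ?_).mul ?_
    · exact (he.comp (contDiff_id.mul contDiff_const)).contDiffAt
    · exact (he.comp (contDiff_id.mul contDiff_const).neg).contDiffAt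
    · exact (hU.comp (contDiff_id.div_const N)).contDiffAt

theorem Faux_compact (U : ℝ → ℂ) (hcpt : HasCompactSupport U) (t N c d : ℝ) (hN : 0 < N) :
    HasCompactSupport (Faux U t N c d) := by
  have h : HasCompactSupport (fun y : ℝ => U (y / N)) := by
    have := hcpt.comp_homeomorph (Homeomorph.mulRight₀ N⁻¹ (inv_ne_zero hN.ne'))
    simpa [div_eq_mul_inv, Function.comp_def] using this
  exact h.mul_left

open scoped FourierTransform in
theorem Faux_fourier (U : ℝ → ℂ) (hsupp : tsupport U ⊆ Set.Ioi 0) (t N c d w : ℝ) (hN : 0 < N) :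
    𝓕 (Faux U t N c d) w = (N : ℂ) ^ ((1 : ℂ) - Complex.I * (t : ℂ)) *
      Udag U (N * (w - c + d)) (1 - Complex.I * (t : ℂ)) := by
  have hN' : (N : ℂ) ≠ 0 := by exact_mod_cast hN.ne'
  rw [Real.fourier_real_eq_integral_exp_smul]
  rw [← MeasureTheory.setIntegral_eq_integral_of_forall_compl_eq_zero (s := Set.Ioi (0:ℝ))]
  · have := MeasureTheory.integral_comp_mul_left_Ioi'
      (fun v : ℝ => Complex.exp (↑(-2 * π * v * w) * Complex.I) • Faux U t N c d v) 0 hN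
    rw [mul_zero] at this
    rw [← this, Udag, ← MeasureTheory.integral_const_mul, ← MeasureTheory.integral_smul]
    apply MeasureTheory.setIntegral_congr_fun measurableSet_Ioi
    intro u hu
    have hu : 0 < u := hu
    have hu' : (u : ℂ) ≠ 0 := by exact_mod_cast hu.ne'
    have h1 : N * u / N = u := by field_simp
    simp only [Faux, e, h1, smul_eq_mul, Complex.real_smul]
    rw [Complex.cpow_sub _ _ hN', Complex.cpow_one, Complex.cpow_def_of_ne_zero hN',
      Complex.cpow_def_of_ne_zero hu', ← Complex.ofReal_log hN.le, ← Complex.ofReal_log hu.le,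
      Real.log_mul hN.ne' hu.ne', div_eq_mul_inv, ← Complex.exp_neg]
    have : ∀ A B C D A' B' C' : ℂ, A + B + C + D = A' + B' + C' →
        (N : ℂ) * (cexp A * (cexp B * cexp C * cexp D * U u)) =
        N * cexp A' * (U u * cexp B' * cexp C') := by
      intro A B C D A' B' C' h
      have : cexp A * cexp B * cexp C * cexp D = cexp A' * cexp B' * cexp C' := by
        rw [← Complex.exp_add, ← Complex.exp_add, ← Complex.exp_add, h, Complex.exp_add,
          Complex.exp_add]
      linear_combination (N * U u) * this
    apply this
    push_cast
    ring
  · intro v hv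
    have hv : v ≤ 0 := not_lt.mp hv
    simp [Faux, U_zero U hsupp (v / N) (div_nonpos_of_nonpos_of_nonneg hv hN.le)]

open scoped FourierTransform in
/-- Poisson summation applied to the `r`-sum: for `U` smooth and compactly supported in
`(0,∞)`, `t, x ∈ ℝ`, `N > 0`, `q, a` positive with `(a,q) = 1` and `a·ā ≡ 1 (mod q)`,
`Σ_{r≥1} r^{−it} e(rā/q) e(−rx/(aq)) U(r/N)
  = N^{1−it} Σ_{r ≡ −ā (mod q)} U†(N(x+ra)/(aq), 1−it)`,
and the right-hand sum converges absolutely. -/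
theorem stmt13 (U : ℝ → ℂ) (hU : ContDiff ℝ (⊤ : ℕ∞) U) (hcpt : HasCompactSupport U)
    (hsupp : tsupport U ⊆ Set.Ioi 0) (t x N : ℝ) (hN : 0 < N)
    (q a : ℕ) (hq : 0 < q) (ha : 0 < a) (hcop : Nat.gcd a q = 1)
    (abar : ℤ) (habar : ((a : ℤ) * abar) % (q : ℤ) = 1 % (q : ℤ)) :
    ((∑' r : ℕ, if 1 ≤ r then
        (r : ℂ) ^ (-(Complex.I * (t : ℂ))) * e ((r : ℝ) * (abar : ℝ) / (q : ℝ)) *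
          e (-((r : ℝ) * x / ((a : ℝ) * (q : ℝ)))) * U ((r : ℝ) / N)
      else 0) =
      (N : ℂ) ^ ((1 : ℂ) - Complex.I * (t : ℂ)) *
        (∑' r : ℤ, if (q : ℤ) ∣ (r + abar) then
            Udag U (N * (x + (r : ℝ) * (a : ℝ)) / ((a : ℝ) * (q : ℝ))) (1 - Complex.I * (t : ℂ))
          else 0)) ∧
    Summable (fun r : ℤ => ‖if (q : ℤ) ∣ (r + abar) then
        Udag U (N * (x + (r : ℝ) * (a : ℝ)) / ((a : ℝ) * (q : ℝ))) (1 - Complex.I * (t : ℂ))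
      else 0‖) := by
  set c : ℝ := (abar : ℝ) / q with hc
  set d : ℝ := x / ((a : ℝ) * q) with hd
  have hqR : (q : ℝ) ≠ 0 := by exact_mod_cast hq.ne'
  have haR : (a : ℝ) ≠ 0 := by exact_mod_cast ha.ne'
  have hN' : (N : ℂ) ≠ 0 := by exact_mod_cast hN.ne'
  have hNp : (N : ℂ) ^ ((1 : ℂ) - Complex.I * (t : ℂ)) ≠ 0 := by
    rw [Complex.cpow_def_of_ne_zero hN']; exact Complex.exp_ne_zero _
  obtain ⟨hsum, hpois⟩ := poisson_aux (Faux U t N c d) (Faux_contDiff U hU hsupp t N c d hN)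
    (Faux_compact U hcpt t N c d hN)
  set R : ℤ → ℂ := fun r : ℤ => if (q : ℤ) ∣ (r + abar) then
        Udag U (N * (x + (r : ℝ) * (a : ℝ)) / ((a : ℝ) * (q : ℝ))) (1 - Complex.I * (t : ℂ))
      else 0 with hR
  let φ : ℤ → ℤ := fun n => q * n - abar
  have hφ : Function.Injective φ := by
    intro m n h
    have h : (q : ℤ) * m - abar = q * n - abar := h
    have hq0 : (q : ℤ) ≠ 0 := by exact_mod_cast hq.ne'
    exact mul_left_cancel₀ hq0 (by linarith)
  have hzero : ∀ r : ℤ, r ∉ Set.range φ → R r = 0 := by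
    intro r hr
    simp only [hR]
    rw [if_neg]
    rintro ⟨n, hn⟩
    exact hr ⟨n, by simp only [φ]; linarith⟩
  have hRφ : ∀ n : ℤ, 𝓕 (Faux U t N c d) (n : ℝ) =
      (N : ℂ) ^ ((1 : ℂ) - Complex.I * (t : ℂ)) * R (φ n) := by
    intro n
    rw [Faux_fourier U hsupp t N c d n hN]
    simp only [hR, φ]
    rw [if_pos ⟨n, by ring⟩]
    congr 2
    rw [hc, hd]
    push_cast
    field_simp
    ring
  constructor
  · have hL : (∑' r : ℕ, if 1 ≤ r then
        (r : ℂ) ^ (-(Complex.I * (t : ℂ))) * e ((r : ℝ) * (abar : ℝ) / (q : ℝ)) *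
          e (-((r : ℝ) * x / ((a : ℝ) * (q : ℝ)))) * U ((r : ℝ) / N)
      else 0) = ∑' n : ℤ, Faux U t N c d n := by
      rw [← (Nat.cast_injective (R := ℤ)).tsum_eq (f := fun n : ℤ => Faux U t N c d n)]
      · apply tsum_congr
        intro r
        split_ifs with hr
        · have hr0 : (r : ℂ) ≠ 0 := by exact_mod_cast (by omega : r ≠ 0)
          simp only [Faux, Int.cast_natCast]
          rw [Complex.cpow_def_of_ne_zero hr0, ← Complex.natCast_log, hc, hd, mul_div_assoc,
            mul_div_assoc]
        · have : r = 0 := by omega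
          subst this
          simp [Faux, U_zero U hsupp 0 le_rfl]
      · intro n hn
        by_contra hn'
        apply hn
        have : n ≤ 0 := by
          by_contra h
          exact hn' ⟨n.toNat, by simp; omega⟩
        have h0 : (n : ℝ) ≤ 0 := by exact_mod_cast this
        simp [Faux, U_zero U hsupp _ (div_nonpos_of_nonpos_of_nonneg h0 hN.le)]
    rw [hL, hpois, tsum_congr hRφ, tsum_mul_left, hφ.tsum_eq]
    intro r hr
    by_contra h
    exact hr (hzero r h)
  · rw [← hφ.summable_iff]
    · have := hsum.mul_left (‖(N : ℂ) ^ ((1 : ℂ) - Complex.I * (t : ℂ))‖⁻¹)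
      refine this.congr fun n => ?_
      rw [hRφ, norm_mul, inv_mul_cancel_left₀ (norm_ne_zero_iff.mpr hNp)]
      rfl
    · intro r hr
      have := hzero r hr
      simp only [hR] at this
      rw [this, norm_zero]
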